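/- Fix a budget B ≥ 0 and nonnegative bids c_1, …, c_{n−1} of the other agents. For a bid x of agent i (with x distinct from every c_j), form the combined sorted list of the n bids {x, c_1, …, c_{n−1}} in nondecreasing order, let k(x) be the largest index j in {1,…,n} such that the j-th smallest combined bid is at most B/j (k(x) = 0 if none exists), and say agent i wins with bid x if the position of x in the sorted combined list (i.e., 1 plus the number of c_j strictly less than x) is at most k(x). Then winning is monotone in the bid: if agent i wins with bid x and x′ ≤ x (with x′ also distinct from every c_j), then agent i wins with bid x′. -/

import Mathlib

/-- The combined bids `{x} ∪ {c j}` of all `m + 1` agents, sorted in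
nondecreasing order. -/
noncomputable def sortedCombinedBids (m : ℕ) (c : Fin m → ℝ) (x : ℝ) : List ℝ :=
  (x ::ₘ Multiset.map c Finset.univ.val).sort (· ≤ ·)

/-- `propShareK m B c x` is the largest index `j ∈ {1, …, m + 1}` such that the
`j`-th smallest combined bid is at most `B / j` (it is `0` if no such index
exists, since `sSup ∅ = 0` in `ℕ`). -/
noncomputable def propShareK (m : ℕ) (B : ℝ) (c : Fin m → ℝ) (x : ℝ) : ℕ :=
  sSup {j : ℕ | 1 ≤ j ∧ j ≤ m + 1 ∧
    (sortedCombinedBids m c x).getD (j - 1) 0 ≤ B / (j : ℝ)}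

/-- The position of agent `i`'s bid `x` in the sorted combined list:
`1` plus the number of other agents' bids strictly less than `x`. -/
noncomputable def bidPosition (m : ℕ) (c : Fin m → ℝ) (x : ℝ) : ℕ :=
  1 + Nat.card {j : Fin m // c j < x}

/-- Agent `i` wins with bid `x` iff its position in the sorted combined list is
at most `propShareK m B c x`. -/
noncomputable def winsWith (m : ℕ) (B : ℝ) (c : Fin m → ℝ) (x : ℝ) : Prop :=
  bidPosition m c x ≤ propShareK m B c x

theorem forall2_orderedInsert (l : List ℝ) (hl : l.Pairwise (· ≤ ·)) :
    ∀ a b : ℝ, a ≤ b → List.Forall₂ (· ≤ ·) (l.orderedInsert (· ≤ ·) a)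
      (l.orderedInsert (· ≤ ·) b) := by
  induction l with
  | nil => intro a b h; simpa using h
  | cons d t ih =>
    intro a b h
    have ht := (List.pairwise_cons.1 hl).2
    have hd := (List.pairwise_cons.1 hl).1
    have hrefl : List.Forall₂ (fun u v : ℝ => u ≤ v) (d :: t) (d :: t) :=
      List.forall₂_refl _
    by_cases h1 : a ≤ d
    · by_cases h2 : b ≤ d
      · simp only [List.orderedInsert, h1, h2, if_true]
        exact List.Forall₂.cons h hrefl
      · simp only [List.orderedInsert, h1, h2, if_true, if_false]
        refine List.Forall₂.cons h1 ?_
        have key := ih ht d b (le_of_lt (not_le.1 h2))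
        have e : t.orderedInsert (· ≤ ·) d = d :: t := by
          cases t with
          | nil => rfl
          | cons e s => simp [List.orderedInsert, hd e (by simp)]
        rwa [e] at key
    · have h2 : ¬ b ≤ d := fun h3 => h1 (h.trans h3)
      simp only [List.orderedInsert, h1, h2, if_false]
      exact List.Forall₂.cons le_rfl (ih ht a b h)

theorem sortedCombinedBids_eq (m : ℕ) (c : Fin m → ℝ) (x : ℝ) :
    sortedCombinedBids m c x =
      ((Multiset.map c Finset.univ.val).sort (· ≤ ·)).orderedInsert (· ≤ ·) x := by
  unfold sortedCombinedBids
  refine List.Perm.eq_of_pairwise' (r := (· ≤ ·)) (Multiset.pairwise_sort _ _)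
    (List.Pairwise.orderedInsert _ _ (Multiset.pairwise_sort _ _)) ?_
  rw [← Multiset.coe_eq_coe]
  rw [Multiset.sort_eq, Multiset.coe_eq_coe.2 (List.perm_orderedInsert _ _ _),
    ← Multiset.cons_coe, Multiset.sort_eq]

theorem forall2_getD {l l' : List ℝ} (h : List.Forall₂ (· ≤ ·) l l') :
    ∀ n, l.getD n 0 ≤ l'.getD n 0 := by
  induction h with
  | nil => simp
  | cons h1 _ ih =>
    intro n
    cases n with
    | zero => simpa using h1
    | succ n => simpa using ih n

/-- Monotonicity of winning in the proportional share allocation rule: fixing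
the budget `B ≥ 0` and the other agents' nonnegative bids `c`, if agent `i`
wins with bid `x` (distinct from every `c j`), and `x' ≤ x` is another bid
distinct from every `c j`, then agent `i` also wins with bid `x'`. -/
theorem proportional_share_monotone_winning
    (m : ℕ) (B : ℝ) (hB : 0 ≤ B) (c : Fin m → ℝ)
    (hc : ∀ j, 0 ≤ c j)
    (x x' : ℝ) (hx : ∀ j, c j ≠ x) (hx' : ∀ j, c j ≠ x')
    (hx'0 : 0 ≤ x') (hle : x' ≤ x)
    (hwin : winsWith m B c x) :
    winsWith m B c x' := by
  unfold winsWith at *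
  have hpos : bidPosition m c x' ≤ bidPosition m c x := by
    unfold bidPosition
    refine Nat.add_le_add_left ?_ 1
    exact Nat.card_le_card_of_injective
      (fun j : {j : Fin m // c j < x'} =>
        (⟨j.1, lt_of_lt_of_le j.2 hle⟩ : {j : Fin m // c j < x}))
      (fun a b hab => Subtype.ext (congrArg (fun z => z.1) hab))
  refine (hpos.trans hwin).trans ?_
  have hbdd : ∀ y, BddAbove {j : ℕ | 1 ≤ j ∧ j ≤ m + 1 ∧
      (sortedCombinedBids m c y).getD (j - 1) 0 ≤ B / (j : ℝ)} :=
    fun y => ⟨m + 1, fun j hj => hj.2.1⟩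
  unfold propShareK
  apply csSup_le' 
  intro j hj
  refine le_csSup (hbdd x') ⟨hj.1, hj.2.1, le_trans ?_ hj.2.2⟩
  rw [sortedCombinedBids_eq, sortedCombinedBids_eq]
  exact forall2_getD (forall2_orderedInsert _ (Multiset.pairwise_sort _ _) _ _ hle) _
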